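/- Let 0 < θ_1, θ_2, θ_3, θ_4 ≤ π/4, let θ := min{θ_1,θ_2,θ_3,θ_4}, and let C := 6(1 + 6√2 + 2√(3(6+√2))) (so C ≤ 114). Then the rotated domino basis S_3(θ_1,θ_2,θ_3,θ_4) is (C/sin 2θ)-rigid: for all positive semidefinite a, b ∈ M_3(ℂ) with ⟨ψ_i, (a⊗b) ψ_i⟩ ≠ 0 for each of the nine rotated domino states ψ_i, one has ‖(a⊗b)/tr(a⊗b) − I/9‖_max ≤ (C/sin 2θ)·δ, where δ is the disturbance of a⊗b on S_3(θ_1,θ_2,θ_3,θ_4). -/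

import Mathlib

open Matrix Kronecker
open scoped ComplexOrder

/-- The disturbance `δ` of the product operator `a ⊗ b` on the family of states `ψ`. -/
noncomputable def disturbance {n dA dB : ℕ} (ψ : Fin n → Fin dA × Fin dB → ℂ)
    (a : Matrix (Fin dA) (Fin dA) ℂ) (b : Matrix (Fin dB) (Fin dB) ℂ) : ℝ :=
  ⨆ p : {q : Fin n × Fin n // q.1 ≠ q.2},
    ‖star (ψ p.1.1) ⬝ᵥ (a ⊗ₖ b).mulVec (ψ p.1.2)‖ /
      Real.sqrt ((star (ψ p.1.1) ⬝ᵥ (a ⊗ₖ b).mulVec (ψ p.1.1)).re *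
        (star (ψ p.1.2) ⬝ᵥ (a ⊗ₖ b).mulVec (ψ p.1.2)).re)

/-- The standard basis vector `|i⟩` of `ℂ³`. -/
noncomputable def e3 (i : Fin 3) : Fin 3 → ℂ := fun k => if k = i then 1 else 0

/-- The product vector `α ⊗ β` in `ℂ³ ⊗ ℂ³`. -/
noncomputable def kp (α β : Fin 3 → ℂ) : Fin 3 × Fin 3 → ℂ := fun p => α p.1 * β p.2

/-- The nine rotated domino states `S₃(θ₁,θ₂,θ₃,θ₄)` in `ℂ³ ⊗ ℂ³`. -/
noncomputable def rotDomino (t1 t2 t3 t4 : ℝ) : Fin 9 → Fin 3 × Fin 3 → ℂ :=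
  ![kp (e3 1) (e3 1),
    kp (e3 0) (fun k => (Real.cos t1 : ℂ) * e3 0 k + (Real.sin t1 : ℂ) * e3 1 k),
    kp (e3 0) (fun k => -(Real.sin t1 : ℂ) * e3 0 k + (Real.cos t1 : ℂ) * e3 1 k),
    kp (e3 2) (fun k => (Real.cos t2 : ℂ) * e3 1 k + (Real.sin t2 : ℂ) * e3 2 k),
    kp (e3 2) (fun k => -(Real.sin t2 : ℂ) * e3 1 k + (Real.cos t2 : ℂ) * e3 2 k),
    kp (fun k => (Real.cos t3 : ℂ) * e3 1 k + (Real.sin t3 : ℂ) * e3 2 k) (e3 0),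
    kp (fun k => -(Real.sin t3 : ℂ) * e3 1 k + (Real.cos t3 : ℂ) * e3 2 k) (e3 0),
    kp (fun k => (Real.cos t4 : ℂ) * e3 0 k + (Real.sin t4 : ℂ) * e3 1 k) (e3 2),
    kp (fun k => -(Real.sin t4 : ℂ) * e3 0 k + (Real.cos t4 : ℂ) * e3 1 k) (e3 2)]

/-- The largest absolute value of an entry of a matrix. -/
noncomputable def maxEntry {m n : Type*} [Fintype m] [Fintype n] (M : Matrix m n ℂ) : ℝ :=
  ⨆ p : m × n, ‖M p.1 p.2‖

/-- The sesquilinear form `⟨x, M y⟩`. -/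
noncomputable def sesq (M : Matrix (Fin 3) (Fin 3) ℂ) (x y : Fin 3 → ℂ) : ℂ :=
  star x ⬝ᵥ M.mulVec y

/-- The vector `cos t |i⟩ + sin t |j⟩`. -/
noncomputable def rot (t : ℝ) (i j : Fin 3) : Fin 3 → ℂ :=
  fun k => (Real.cos t : ℂ) * e3 i k + (Real.sin t : ℂ) * e3 j k

/-- The vector `-sin t |i⟩ + cos t |j⟩`. -/
noncomputable def rotPerp (t : ℝ) (i j : Fin 3) : Fin 3 → ℂ :=
  fun k => -(Real.sin t : ℂ) * e3 i k + (Real.cos t : ℂ) * e3 j k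

/-- The disturbance of `a ⊗ b` on the two product states `α ⊗ β`, `α' ⊗ β'` is at most `d`. -/
def DisturbLE (a b : Matrix (Fin 3) (Fin 3) ℂ) (d : ℝ) (α β α' β' : Fin 3 → ℂ) : Prop :=
  ‖sesq a α α' * sesq b β β'‖ ^ 2 ≤
    d ^ 2 * ((sesq a α α * sesq b β β).re * (sesq a α' α' * sesq b β' β').re)

lemma DisturbLE.swap {a b : Matrix (Fin 3) (Fin 3) ℂ} {d : ℝ} {α β α' β' : Fin 3 → ℂ}
    (h : DisturbLE a b d α β α' β') : DisturbLE b a d β α β' α' := by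
  unfold DisturbLE at *
  simpa only [mul_comm] using h

lemma kronecker_sesq (a b : Matrix (Fin 3) (Fin 3) ℂ) (α β α' β' : Fin 3 → ℂ) :
    star (kp α β) ⬝ᵥ (a ⊗ₖ b).mulVec (kp α' β') = sesq a α α' * sesq b β β' := by
  simp only [sesq, kp, dotProduct, mulVec, kroneckerMap_apply, Fintype.sum_prod_type,
    Pi.star_apply, star_mul', Fin.sum_univ_three]
  ring

lemma sesq_e3 (M : Matrix (Fin 3) (Fin 3) ℂ) (i j : Fin 3) : sesq M (e3 i) (e3 j) = M i j := by
  simp [sesq, e3, dotProduct, mulVec, apply_ite (starRingEnd ℂ)]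

lemma sesq_rot_right (M : Matrix (Fin 3) (Fin 3) ℂ) (x : Fin 3 → ℂ) (t : ℝ) (i j : Fin 3) :
    sesq M x (rot t i j) =
      (Real.cos t : ℂ) * sesq M x (e3 i) + (Real.sin t : ℂ) * sesq M x (e3 j) := by
  simp only [sesq, rot, dotProduct, mulVec, Fin.sum_univ_three]
  ring

lemma sesq_rotPerp_right (M : Matrix (Fin 3) (Fin 3) ℂ) (x : Fin 3 → ℂ) (t : ℝ) (i j : Fin 3) :
    sesq M x (rotPerp t i j) =
      -(Real.sin t : ℂ) * sesq M x (e3 i) + (Real.cos t : ℂ) * sesq M x (e3 j) := by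
  simp only [sesq, rotPerp, dotProduct, mulVec, Fin.sum_univ_three]
  ring

lemma sesq_rot_left (M : Matrix (Fin 3) (Fin 3) ℂ) (x : Fin 3 → ℂ) (t : ℝ) (i j : Fin 3) :
    sesq M (rot t i j) x =
      (Real.cos t : ℂ) * sesq M (e3 i) x + (Real.sin t : ℂ) * sesq M (e3 j) x := by
  simp only [sesq, rot, dotProduct, mulVec, Fin.sum_univ_three, Pi.star_apply, star_add, star_mul',
    Complex.star_def, Complex.conj_ofReal]
  ring

lemma sesq_rotPerp_left (M : Matrix (Fin 3) (Fin 3) ℂ) (x : Fin 3 → ℂ) (t : ℝ) (i j : Fin 3) :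
    sesq M (rotPerp t i j) x =
      -(Real.sin t : ℂ) * sesq M (e3 i) x + (Real.cos t : ℂ) * sesq M (e3 j) x := by
  simp only [sesq, rotPerp, dotProduct, mulVec, Fin.sum_univ_three, Pi.star_apply, star_add,
    star_mul', Complex.star_def, Complex.conj_ofReal, star_neg]
  ring

lemma norm_sq_rotation (t : ℝ) (p q : ℂ) :
    ‖(Real.cos t : ℂ) * p + (Real.sin t : ℂ) * q‖ ^ 2 +
      ‖-(Real.sin t : ℂ) * p + (Real.cos t : ℂ) * q‖ ^ 2 = ‖p‖ ^ 2 + ‖q‖ ^ 2 := by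
  simp only [← Complex.normSq_eq_norm_sq, Complex.normSq_apply, Complex.add_re, Complex.add_im,
    Complex.mul_re, Complex.mul_im, Complex.neg_re, Complex.neg_im, Complex.ofReal_re,
    Complex.ofReal_im]
  linear_combination (p.re ^ 2 + p.im ^ 2 + q.re ^ 2 + q.im ^ 2) * Real.sin_sq_add_cos_sq t

lemma sesq_rot_add_rotPerp (M : Matrix (Fin 3) (Fin 3) ℂ) (t : ℝ) (i j : Fin 3) :
    sesq M (rot t i j) (rot t i j) + sesq M (rotPerp t i j) (rotPerp t i j) = M i i + M j j := by
  have h : (Real.sin t : ℂ) ^ 2 + (Real.cos t : ℂ) ^ 2 = 1 := by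
    exact_mod_cast Real.sin_sq_add_cos_sq t
  simp only [sesq_rot_right, sesq_rotPerp_right, sesq_rot_left, sesq_rotPerp_left, sesq_e3]
  linear_combination (M i i + M j j) * h

lemma Matrix.PosSemidef.diag_eq_ofReal {M : Matrix (Fin 3) (Fin 3) ℂ} (hM : M.PosSemidef)
    (i : Fin 3) : M i i = ((M i i).re : ℂ) :=
  (hM.1.coe_re_apply_self i).symm

lemma Matrix.PosSemidef.diag_re_nonneg {M : Matrix (Fin 3) (Fin 3) ℂ} (hM : M.PosSemidef)
    (i : Fin 3) : 0 ≤ (M i i).re :=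
  (Complex.nonneg_iff.mp hM.diag_nonneg).1

lemma Matrix.PosSemidef.norm_apply_comm {M : Matrix (Fin 3) (Fin 3) ℂ} (hM : M.PosSemidef)
    (i j : Fin 3) : ‖M i j‖ = ‖M j i‖ := by
  rw [← hM.1.apply i j, norm_star]

lemma Matrix.PosSemidef.sesq_eq_ofReal {M : Matrix (Fin 3) (Fin 3) ℂ} (hM : M.PosSemidef)
    (x : Fin 3 → ℂ) : 0 ≤ (sesq M x x).re ∧ sesq M x x = ((sesq M x x).re : ℂ) := by
  have h : 0 ≤ sesq M x x := hM.dotProduct_mulVec_nonneg x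
  exact ⟨(Complex.nonneg_iff.mp h).1, Complex.ext rfl (Complex.nonneg_iff.mp h).2.symm⟩

lemma Matrix.PosSemidef.two_mul_norm_apply_le {M : Matrix (Fin 3) (Fin 3) ℂ} (hM : M.PosSemidef)
    (i j : Fin 3) : 2 * ‖M i j‖ ≤ (M i i).re + (M j j).re := by
  by_cases h0 : M i j = 0
  · rw [h0, norm_zero]
    linarith [hM.diag_re_nonneg i, hM.diag_re_nonneg j]
  have hn : (‖M i j‖ : ℂ) ≠ 0 := by simpa using h0
  have hsq : (starRingEnd ℂ) (M i j) * M i j = (‖M i j‖ : ℂ) ^ 2 := Complex.conj_mul' _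
  set z : ℂ := -(starRingEnd ℂ) (M i j) / ‖M i j‖ with hz
  have hzz : (starRingEnd ℂ) z * z = 1 := by
    rw [hz]
    simp only [map_div₀, map_neg, Complex.conj_conj, Complex.conj_ofReal]
    field_simp
    linear_combination hsq
  have hzm : z * M i j = -‖M i j‖ := by
    rw [hz]
    field_simp
    linear_combination -hsq
  have hzm' : (starRingEnd ℂ) z * M j i = -‖M i j‖ := by
    have := congrArg (starRingEnd ℂ) hzm
    rw [map_mul, map_neg, Complex.conj_ofReal] at this
    rw [← this, ← hM.1.apply j i]; rfl
  have key : sesq M (fun k => e3 i k + z * e3 j k) (fun k => e3 i k + z * e3 j k) =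
      sesq M (e3 i) (e3 i) + z * sesq M (e3 i) (e3 j) +
        (starRingEnd ℂ) z * sesq M (e3 j) (e3 i) +
        (starRingEnd ℂ) z * z * sesq M (e3 j) (e3 j) := by
    simp only [sesq, dotProduct, mulVec, Fin.sum_univ_three, Pi.star_apply, star_add, star_mul',
      Complex.star_def]
    ring
  have hpos := (hM.sesq_eq_ofReal (fun k => e3 i k + z * e3 j k)).1
  rw [key] at hpos
  simp only [sesq_e3, hzz, hzm, hzm'] at hpos
  simp at hpos
  linarith

lemma Matrix.PosSemidef.norm_apply_le_trace {M : Matrix (Fin 3) (Fin 3) ℂ} (hM : M.PosSemidef)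
    (i j : Fin 3) : ‖M i j‖ ≤ (M 0 0).re + (M 1 1).re + (M 2 2).re := by
  have h := hM.two_mul_norm_apply_le i j
  have h0 := hM.diag_re_nonneg 0
  have h1 := hM.diag_re_nonneg 1
  have h2 := hM.diag_re_nonneg 2
  fin_cases i <;> fin_cases j <;> simp at h ⊢ <;> linarith

/-- Two states sharing the first factor control the difference of two diagonal entries. -/
lemma abs_diag_sub_le {a b : Matrix (Fin 3) (Fin 3) ℂ} (ha : a.PosSemidef) (hb : b.PosSemidef)
    {d t : ℝ} (hd : 0 ≤ d) {i k l : Fin 3} (hi : 0 < (a i i).re)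
    (h : DisturbLE a b d (e3 i) (rot t k l) (e3 i) (rotPerp t k l)) :
    |(b l l).re - (b k k).re| * Real.sin (2 * t) ≤
      d * ((b k k).re + (b l l).re) + 2 * ‖b k l‖ := by
  have hsum := congrArg Complex.re (sesq_rot_add_rotPerp b t k l)
  have hF : (sesq b (rot t k l) (rotPerp t k l)).re =
      Real.sin (2 * t) / 2 * ((b l l).re - (b k k).re) + Real.cos (2 * t) * (b k l).re := by
    have hlk : (b l k).re = (b k l).re := by
      rw [← hb.1.apply l k]; simp
    simp only [sesq_rotPerp_right, sesq_rot_left, sesq_e3]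
    simp only [Complex.add_re, Complex.add_im,
      Complex.mul_re, Complex.mul_im, Complex.neg_re, Complex.neg_im, Complex.ofReal_re,
      Complex.ofReal_im, Real.sin_two_mul, Real.cos_two_mul', hlk]
    ring
  obtain ⟨hU, hU'⟩ := hb.sesq_eq_ofReal (rot t k l)
  obtain ⟨hV, hV'⟩ := hb.sesq_eq_ofReal (rotPerp t k l)
  unfold DisturbLE at h
  rw [hU', hV', sesq_e3, ha.diag_eq_ofReal i] at h
  set F := sesq b (rot t k l) (rotPerp t k l)
  set U := (sesq b (rot t k l) (rot t k l)).re
  set V := (sesq b (rotPerp t k l) (rotPerp t k l)).re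
  set r := (a i i).re
  rw [← Complex.ofReal_mul, ← Complex.ofReal_mul, Complex.ofReal_re, Complex.ofReal_re, norm_mul,
    Complex.norm_real, Real.norm_of_nonneg hi.le] at h
  have hF2 : ‖F‖ ^ 2 ≤ d ^ 2 * (U * V) := by
    have hr : 0 < r ^ 2 := by positivity
    refine le_of_mul_le_mul_left ?_ hr
    linarith
  have hFn : ‖F‖ ≤ d * (U + V) / 2 := by
    refine abs_le_of_sq_le_sq' ?_ (by positivity) |>.2
    nlinarith [mul_nonneg (sq_nonneg d) (sq_nonneg (U - V))]
  rw [Complex.add_re, Complex.add_re] at hsum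
  have hre := abs_le.mp ((Complex.abs_re_le_norm F).trans hFn)
  rw [hF] at hre
  have hbn : |Real.cos (2 * t) * (b k l).re| ≤ ‖b k l‖ := by
    rw [abs_mul]
    have := Complex.abs_re_le_norm (b k l)
    nlinarith [Real.abs_cos_le_one (2 * t), abs_nonneg (b k l).re]
  have hbn' := abs_le.mp hbn
  have hUV : d * (U + V) = d * ((b k k).re + (b l l).re) := by
    rw [show U + V = (b k k).re + (b l l).re from hsum]
  rcases abs_cases ((b l l).re - (b k k).re) with ⟨h1, -⟩ | ⟨h1, -⟩ <;> rw [h1] <;> linarith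

/-- Summing over a rotated pair in the second state. -/
lemma norm_sq_mul_le_of_pair {a b : Matrix (Fin 3) (Fin 3) ℂ} {d t : ℝ}
    {α β α' : Fin 3 → ℂ} {k l : Fin 3}
    (h : DisturbLE a b d α β α' (rot t k l)) (h' : DisturbLE a b d α β α' (rotPerp t k l)) :
    ‖sesq a α α'‖ ^ 2 * (‖sesq b β (e3 k)‖ ^ 2 + ‖sesq b β (e3 l)‖ ^ 2) ≤
      d ^ 2 * ((sesq a α α * sesq b β β).re * (sesq a α' α' * (b k k + b l l)).re) := by
  unfold DisturbLE at h h'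
  rw [← norm_sq_rotation t, ← sesq_rot_right, ← sesq_rotPerp_right, ← sesq_rot_add_rotPerp b t k l,
    mul_add (sesq a α' α'), Complex.add_re]
  rw [norm_mul, mul_pow] at h h'
  linarith

/-- A rotated pair against the central state controls an entry of the first factor. -/
lemma norm_sq_center_le {a b : Matrix (Fin 3) (Fin 3) ℂ} (ha : a.PosSemidef) (hb : b.PosSemidef)
    {d t : ℝ} {j k l : Fin 3}
    (h : DisturbLE a b d (e3 1) (e3 1) (e3 j) (rot t k l))
    (h' : DisturbLE a b d (e3 1) (e3 1) (e3 j) (rotPerp t k l)) :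
    ‖a 1 j‖ ^ 2 * (‖b 1 k‖ ^ 2 + ‖b 1 l‖ ^ 2) ≤
      d ^ 2 * ((a 1 1).re * (b 1 1).re * ((a j j).re * ((b k k).re + (b l l).re))) := by
  have := norm_sq_mul_le_of_pair h h'
  simp only [sesq_e3] at this
  rw [ha.diag_eq_ofReal 1, ha.diag_eq_ofReal j, hb.diag_eq_ofReal k, hb.diag_eq_ofReal l,
    hb.diag_eq_ofReal 1] at this
  simpa [← Complex.ofReal_mul, ← Complex.ofReal_add] using this

/-- Two rotated pairs with distinct first factors control an entry of the first factor. -/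
lemma norm_sq_corner_le {a b : Matrix (Fin 3) (Fin 3) ℂ} (ha : a.PosSemidef) (hb : b.PosSemidef)
    {d t t' : ℝ} {i j k l k' l' : Fin 3}
    (h1 : DisturbLE a b d (e3 i) (rot t k l) (e3 j) (rot t' k' l'))
    (h2 : DisturbLE a b d (e3 i) (rot t k l) (e3 j) (rotPerp t' k' l'))
    (h3 : DisturbLE a b d (e3 i) (rotPerp t k l) (e3 j) (rot t' k' l'))
    (h4 : DisturbLE a b d (e3 i) (rotPerp t k l) (e3 j) (rotPerp t' k' l')) :
    ‖a i j‖ ^ 2 * (‖b k k'‖ ^ 2 + ‖b l k'‖ ^ 2 + (‖b k l'‖ ^ 2 + ‖b l l'‖ ^ 2)) ≤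
      d ^ 2 * ((a i i).re * ((b k k).re + (b l l).re) *
        ((a j j).re * ((b k' k').re + (b l' l').re))) := by
  have e1 := norm_sq_mul_le_of_pair h1 h2
  have e2 := norm_sq_mul_le_of_pair h3 h4
  have hsum := congrArg (fun z => (a i i * z).re) (sesq_rot_add_rotPerp b t k l)
  simp only [sesq_e3, mul_add, Complex.add_re] at e1 e2 hsum
  have p1 := norm_sq_rotation t (b k k') (b l k')
  have p2 := norm_sq_rotation t (b k l') (b l l')
  rw [← p1, ← p2]
  simp only [sesq_rot_left, sesq_rotPerp_left, sesq_e3] at e1 e2 hsum ⊢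
  have hR : ∀ x y : Fin 3, (a x x * b y y).re = (a x x).re * (b y y).re := by
    intro x y
    rw [ha.diag_eq_ofReal x, hb.diag_eq_ofReal y]
    simp [← Complex.ofReal_mul]
  simp only [hR] at e1 e2 hsum
  rw [mul_add ((a i i).re), ← hsum]
  linarith

lemma offDiag_and_diag_step {A B A' B' X d S m : ℝ} (hA : 0 < A) (hB : 0 < B)
    (hAm : A' ≤ m * A) (hB' : 0 ≤ B') (hBm : B' ≤ m * B) (hm : 1 ≤ m) (hd : 0 ≤ d)
    (hX : X ^ 2 * B ^ 2 ≤ d ^ 2 * (A * B * (A' * (B' + B))))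
    (hdiff : |A' - A| * S ≤ d * (A' + A) + 2 * X) :
    X ≤ d * (m + 1 / 2) * A ∧ |A' - A| * S ≤ d * (2 + 3 * m) * A := by
  have hX' : X ≤ d * (m + 1 / 2) * A := by
    have h1 : A' * (B' + B) ≤ (m * A) * ((m + 1) * B) := by
      apply mul_le_mul hAm (by linarith) (by positivity) (by positivity)
    have h2 : X ^ 2 * B ^ 2 ≤ (d * (m + 1 / 2) * A) ^ 2 * B ^ 2 := by
      calc X ^ 2 * B ^ 2 ≤ d ^ 2 * (A * B * ((m * A) * ((m + 1) * B))) := by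
            refine hX.trans ?_
            gcongr
        _ ≤ (d * (m + 1 / 2) * A) ^ 2 * B ^ 2 := by
            nlinarith [sq_nonneg (d * A * B)]
    have h3 := le_of_mul_le_mul_right h2 (by positivity : 0 < B ^ 2)
    exact (abs_le_of_sq_le_sq' h3 (by positivity)).2
  refine ⟨hX', ?_⟩
  have : d * A' ≤ d * (m * A) := by gcongr
  linarith

/-- The cyclic system of estimates forces all diagonal ratios to be close to one. -/
lemma diag_ratio_bounds {A0 A1 A2 B0 B1 B2 X0 X2 Y0 Y2 d S : ℝ} (hA0 : 0 ≤ A0) (hA1 : 0 < A1)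
    (hA2 : 0 ≤ A2) (hB0 : 0 ≤ B0) (hB1 : 0 < B1) (hB2 : 0 ≤ B2) (hd : 0 ≤ d)
    (hdS : 100 * d ≤ S) (hS : 0 < S)
    (hX0 : X0 ^ 2 * B1 ^ 2 ≤ d ^ 2 * (A1 * B1 * (A0 * (B0 + B1))))
    (hX2 : X2 ^ 2 * B1 ^ 2 ≤ d ^ 2 * (A1 * B1 * (A2 * (B2 + B1))))
    (hY0 : Y0 ^ 2 * A1 ^ 2 ≤ d ^ 2 * (B1 * A1 * (B0 * (A2 + A1))))
    (hY2 : Y2 ^ 2 * A1 ^ 2 ≤ d ^ 2 * (B1 * A1 * (B2 * (A0 + A1))))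
    (hA0' : |A0 - A1| * S ≤ d * (A0 + A1) + 2 * X0)
    (hA2' : |A2 - A1| * S ≤ d * (A2 + A1) + 2 * X2)
    (hB0' : |B0 - B1| * S ≤ d * (B0 + B1) + 2 * Y0)
    (hB2' : |B2 - B1| * S ≤ d * (B2 + B1) + 2 * Y2) :
    (X0 ≤ 2 * d * A1 ∧ |A0 - A1| * S ≤ 6 * d * A1) ∧
    (X2 ≤ 2 * d * A1 ∧ |A2 - A1| * S ≤ 6 * d * A1) ∧
    (Y0 ≤ 2 * d * B1 ∧ |B0 - B1| * S ≤ 6 * d * B1) ∧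
    (Y2 ≤ 2 * d * B1 ∧ |B2 - B1| * S ≤ 6 * d * B1) := by
  obtain ⟨m, hm⟩ : ∃ m, m = max 1 (max (max (A0 / A1) (A2 / A1)) (max (B0 / B1) (B2 / B1))) :=
    ⟨_, rfl⟩
  have hm1 : 1 ≤ m := hm ▸ le_max_left _ _
  have a0 : A0 ≤ m * A1 := by rw [← div_le_iff₀ hA1, hm]; simp
  have a2 : A2 ≤ m * A1 := by rw [← div_le_iff₀ hA1, hm]; simp
  have b0 : B0 ≤ m * B1 := by rw [← div_le_iff₀ hB1, hm]; simp
  have b2 : B2 ≤ m * B1 := by rw [← div_le_iff₀ hB1, hm]; simp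
  have sX0 := offDiag_and_diag_step hA1 hB1 a0 hB0 b0 hm1 hd hX0 hA0'
  have sX2 := offDiag_and_diag_step hA1 hB1 a2 hB2 b2 hm1 hd hX2 hA2'
  have sY0 := offDiag_and_diag_step hB1 hA1 b0 hA2 a2 hm1 hd hY0 hB0'
  have sY2 := offDiag_and_diag_step hB1 hA1 b2 hA0 a0 hm1 hd hY2 hB2'
  have ratio : ∀ {P Q : ℝ}, 0 < Q → |P - Q| * S ≤ d * (2 + 3 * m) * Q →
      P / Q ≤ 1 + (2 + 3 * m) / 100 := by
    intro P Q hQ h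
    rw [div_le_iff₀ hQ]
    have h1 : |P - Q| * S ≤ ((2 + 3 * m) / 100 * Q) * S := by
      have : 100 * d * ((2 + 3 * m) * Q) ≤ S * ((2 + 3 * m) * Q) := by gcongr
      linarith
    have h2 := le_of_mul_le_mul_right h1 hS
    linarith [le_abs_self (P - Q)]
  have hm2 : m ≤ 1 + (2 + 3 * m) / 100 := by
    conv_lhs => rw [hm]
    refine max_le (by linarith) (max_le (max_le ?_ ?_) (max_le ?_ ?_))
    · exact ratio hA1 sX0.2
    · exact ratio hA1 sX2.2
    · exact ratio hB1 sY0.2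
    · exact ratio hB1 sY2.2
  have hm3 : m ≤ 11 / 10 := by linarith
  have final : ∀ {X Q R : ℝ}, 0 < Q → X ≤ d * (m + 1 / 2) * Q ∧ R ≤ d * (2 + 3 * m) * Q →
      X ≤ 2 * d * Q ∧ R ≤ 6 * d * Q := by
    intro X Q R hQ h
    have : d * Q * m ≤ d * Q * (11 / 10) := by gcongr
    have h0 : 0 ≤ d * Q := by positivity
    constructor <;> linarith [h.1, h.2]
  exact ⟨final hA1 sX0, final hA1 sX2, final hB1 sY0, final hB1 sY2⟩

lemma le_mul_of_abs_sub_mul_le {P Q d S : ℝ} (hQ : 0 < Q) (hS : 0 < S) (hdS : 100 * d ≤ S)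
    (h : |P - Q| * S ≤ 6 * d * Q) : |P - Q| ≤ 6 * (d / S) * Q ∧ P ≤ 11 / 10 * Q ∧
      9 / 10 * Q ≤ P := by
  have h1 : |P - Q| ≤ 6 * (d / S) * Q := by
    rw [← le_div_iff₀ hS] at h
    exact h.trans_eq (by ring)
  have h2 : d / S ≤ 1 / 100 := by rw [div_le_iff₀ hS]; linarith
  have h3 : d / S * Q ≤ 1 / 100 * Q := by gcongr
  have := abs_le.mp h1
  exact ⟨h1, by linarith, by linarith⟩

lemma corner_le {A0 A1 A2 B0 B1 B2 Z d : ℝ} (hA1 : 0 < A1)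
    (hA2 : 0 ≤ A2) (hB0 : 0 ≤ B0) (hB1 : 0 < B1) (hB2 : 0 ≤ B2) (hd : 0 ≤ d)
    (a0 : A0 ≤ 11 / 10 * A1) (a2 : A2 ≤ 11 / 10 * A1) (b0 : B0 ≤ 11 / 10 * B1)
    (b2 : B2 ≤ 11 / 10 * B1)
    (hZ : Z ^ 2 * B1 ^ 2 ≤ d ^ 2 * (A0 * (B0 + B1) * (A2 * (B2 + B1)))) : Z ≤ 3 * d * A1 := by
  have h2 : Z ^ 2 * B1 ^ 2 ≤ (3 * d * A1) ^ 2 * B1 ^ 2 := by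
    calc Z ^ 2 * B1 ^ 2
        ≤ d ^ 2 * ((11 / 10 * A1) * (11 / 10 * B1 + B1) * ((11 / 10 * A1) *
          (11 / 10 * B1 + B1))) := by
          refine hZ.trans ?_
          gcongr
      _ ≤ (3 * d * A1) ^ 2 * B1 ^ 2 := by nlinarith [sq_nonneg (d * A1 * B1)]
  have h3 := le_of_mul_le_mul_right h2 (by positivity : 0 < B1 ^ 2)
  exact (abs_le_of_sq_le_sq' h3 (by positivity)).2

/-- Quantitative closeness of a `3 × 3` matrix to a multiple of the identity. -/
def NearScalar (M : Matrix (Fin 3) (Fin 3) ℂ) (ε : ℝ) : Prop :=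
  (∀ i, |(M i i).re - (M 1 1).re| ≤ 6 * ε * (M 1 1).re) ∧
    ∀ i j, i ≠ j → ‖M i j‖ ≤ 3 * ε * (M 1 1).re

lemma NearScalar.abs_diag_div_trace_sub_le {M : Matrix (Fin 3) (Fin 3) ℂ} {ε : ℝ}
    (h : NearScalar M ε) (hε : ε ≤ 1 / 100) (h1 : 0 < (M 1 1).re) (i : Fin 3) :
    |(M i i).re / ((M 0 0).re + (M 1 1).re + (M 2 2).re) - 1 / 3| ≤ 4 * ε := by
  have h0 := abs_le.mp (h.1 0)
  have h2 := abs_le.mp (h.1 2)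
  have hi := abs_le.mp (h.1 i)
  have hε' : ε * (M 1 1).re ≤ 1 / 100 * (M 1 1).re := by gcongr
  have hε0 : 0 ≤ ε * (M 1 1).re := by linarith
  have hε1 : 0 ≤ ε := nonneg_of_mul_nonneg_left hε0 h1
  have hT : 28 / 10 * (M 1 1).re ≤ (M 0 0).re + (M 1 1).re + (M 2 2).re := by linarith
  set T := (M 0 0).re + (M 1 1).re + (M 2 2).re with hTdef
  have hT0 : 0 < T := by linarith
  have hεT : ε * (28 / 10 * (M 1 1).re) ≤ ε * T := by gcongr
  rw [abs_le, le_sub_iff_add_le, sub_le_iff_le_add, le_div_iff₀ hT0, div_le_iff₀ hT0]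
  constructor <;> linarith

lemma Matrix.PosSemidef.trace_eq_ofReal {M : Matrix (Fin 3) (Fin 3) ℂ} (hM : M.PosSemidef) :
    M.trace = (((M 0 0).re + (M 1 1).re + (M 2 2).re : ℝ) : ℂ) := by
  rw [Matrix.trace, Fin.sum_univ_three, diag_apply, diag_apply, diag_apply, hM.diag_eq_ofReal 0,
    hM.diag_eq_ofReal 1, hM.diag_eq_ofReal 2]
  simp

/-- An entrywise bound on `(a ⊗ b) / tr (a ⊗ b) - I / 9` from bounds on the normalized factors. -/
lemma norm_kronecker_sub_le {a b : Matrix (Fin 3) (Fin 3) ℂ} (ha : a.PosSemidef)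
    (hb : b.PosSemidef) {R : ℝ} (ha1 : 0 < (a 1 1).re) (hb1 : 0 < (b 1 1).re)
    (hdiag : ∀ i j, |(a i i).re / ((a 0 0).re + (a 1 1).re + (a 2 2).re) *
      ((b j j).re / ((b 0 0).re + (b 1 1).re + (b 2 2).re)) - 1 / 9| ≤ R)
    (hoff : ∀ i j k l, (i, j) ≠ (k, l) →
      ‖a i k‖ / ((a 0 0).re + (a 1 1).re + (a 2 2).re) *
        (‖b j l‖ / ((b 0 0).re + (b 1 1).re + (b 2 2).re)) ≤ R) (p q : Fin 3 × Fin 3) :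
    ‖(((a ⊗ₖ b).trace)⁻¹ • (a ⊗ₖ b) -
      ((9 : ℂ))⁻¹ • (1 : Matrix (Fin 3 × Fin 3) (Fin 3 × Fin 3) ℂ)) p q‖ ≤ R := by
  obtain ⟨i, j⟩ := p
  obtain ⟨k, l⟩ := q
  rw [trace_kronecker, ha.trace_eq_ofReal, hb.trace_eq_ofReal]
  have hTA : 0 < (a 0 0).re + (a 1 1).re + (a 2 2).re := by
    linarith [ha.diag_re_nonneg 0, ha.diag_re_nonneg 2]
  have hTB : 0 < (b 0 0).re + (b 1 1).re + (b 2 2).re := by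
    linarith [hb.diag_re_nonneg 0, hb.diag_re_nonneg 2]
  rw [Matrix.sub_apply, Matrix.smul_apply, Matrix.smul_apply, kroneckerMap_apply, smul_eq_mul,
    smul_eq_mul, ← Complex.ofReal_mul, ← Complex.ofReal_inv]
  by_cases h : (i, j) = (k, l)
  · obtain ⟨rfl, rfl⟩ := Prod.mk.inj h
    rw [Matrix.one_apply_eq, ha.diag_eq_ofReal i, hb.diag_eq_ofReal j]
    refine le_of_eq_of_le ?_ (hdiag i j)
    rw [← Real.norm_eq_abs, ← Complex.norm_real]
    congr 1
    push_cast
    rw [mul_inv]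
    ring
  · rw [Matrix.one_apply_ne h, mul_zero, sub_zero, norm_mul, norm_mul, Complex.norm_real,
      Real.norm_of_nonneg (by positivity)]
    refine le_of_eq_of_le ?_ (hoff i j k l h)
    field_simp

lemma norm_kronecker_sub_le_one {a b : Matrix (Fin 3) (Fin 3) ℂ} (ha : a.PosSemidef)
    (hb : b.PosSemidef) (ha1 : 0 < (a 1 1).re) (hb1 : 0 < (b 1 1).re) (p q : Fin 3 × Fin 3) :
    ‖(((a ⊗ₖ b).trace)⁻¹ • (a ⊗ₖ b) -
      ((9 : ℂ))⁻¹ • (1 : Matrix (Fin 3 × Fin 3) (Fin 3 × Fin 3) ℂ)) p q‖ ≤ 1 := by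
  have bound : ∀ {M : Matrix (Fin 3) (Fin 3) ℂ}, M.PosSemidef → 0 < (M 1 1).re → ∀ i j,
      0 ≤ ‖M i j‖ / ((M 0 0).re + (M 1 1).re + (M 2 2).re) ∧
        ‖M i j‖ / ((M 0 0).re + (M 1 1).re + (M 2 2).re) ≤ 1 := by
    intro M hM h1 i j
    have hT : 0 < (M 0 0).re + (M 1 1).re + (M 2 2).re := by
      linarith [hM.diag_re_nonneg 0, hM.diag_re_nonneg 2]
    exact ⟨by positivity, (div_le_one hT).mpr (hM.norm_apply_le_trace i j)⟩
  have prod : ∀ i j k l, 0 ≤ ‖a i k‖ / ((a 0 0).re + (a 1 1).re + (a 2 2).re) *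
        (‖b j l‖ / ((b 0 0).re + (b 1 1).re + (b 2 2).re)) ∧
      ‖a i k‖ / ((a 0 0).re + (a 1 1).re + (a 2 2).re) *
        (‖b j l‖ / ((b 0 0).re + (b 1 1).re + (b 2 2).re)) ≤ 1 := by
    intro i j k l
    obtain ⟨h1, h2⟩ := bound ha ha1 i k
    obtain ⟨h3, h4⟩ := bound hb hb1 j l
    exact ⟨mul_nonneg h1 h3, mul_le_one₀ h2 h3 h4⟩
  have hnorm : ∀ {M : Matrix (Fin 3) (Fin 3) ℂ}, M.PosSemidef → ∀ i, ‖M i i‖ = (M i i).re := by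
    intro M hM i
    rw [hM.diag_eq_ofReal i, Complex.norm_real, Complex.ofReal_re,
      Real.norm_of_nonneg (hM.diag_re_nonneg i)]
  refine norm_kronecker_sub_le ha hb ha1 hb1 (fun i j => ?_) (fun i j k l _ => (prod i j k l).2) p q
  have h := prod i j i j
  rw [hnorm ha, hnorm hb] at h
  rw [abs_le]
  constructor <;> linarith [h.1, h.2]

lemma norm_kronecker_sub_le_of_nearScalar {a b : Matrix (Fin 3) (Fin 3) ℂ} (ha : a.PosSemidef)
    (hb : b.PosSemidef) {ε : ℝ} (hε0 : 0 ≤ ε) (hε : ε ≤ 1 / 100) (ha1 : 0 < (a 1 1).re)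
    (hb1 : 0 < (b 1 1).re) (hna : NearScalar a ε) (hnb : NearScalar b ε) (p q : Fin 3 × Fin 3) :
    ‖(((a ⊗ₖ b).trace)⁻¹ • (a ⊗ₖ b) -
      ((9 : ℂ))⁻¹ • (1 : Matrix (Fin 3 × Fin 3) (Fin 3 × Fin 3) ℂ)) p q‖ ≤ 100 * ε := by
  have trace_pos : ∀ {M : Matrix (Fin 3) (Fin 3) ℂ}, M.PosSemidef → 0 < (M 1 1).re →
      0 < (M 0 0).re + (M 1 1).re + (M 2 2).re := by
    intro M hM h1
    linarith [hM.diag_re_nonneg 0, hM.diag_re_nonneg 2]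
  have bound : ∀ {M : Matrix (Fin 3) (Fin 3) ℂ}, M.PosSemidef → 0 < (M 1 1).re → ∀ i j,
      ‖M i j‖ / ((M 0 0).re + (M 1 1).re + (M 2 2).re) ≤ 1 := fun hM h1 i j =>
    (div_le_one (trace_pos hM h1)).mpr (hM.norm_apply_le_trace i j)
  have small : ∀ {M : Matrix (Fin 3) (Fin 3) ℂ}, M.PosSemidef → 0 < (M 1 1).re →
      NearScalar M ε → ∀ i j, i ≠ j →
      ‖M i j‖ / ((M 0 0).re + (M 1 1).re + (M 2 2).re) ≤ 3 * ε := by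
    intro M hM h1 hn i j hij
    rw [div_le_iff₀ (trace_pos hM h1)]
    refine (hn.2 i j hij).trans ?_
    gcongr
    linarith [hM.diag_re_nonneg 0, hM.diag_re_nonneg 2]
  have hTA := trace_pos ha ha1
  have hTB := trace_pos hb hb1
  refine norm_kronecker_sub_le ha hb ha1 hb1 (fun i j => ?_) (fun i j k l h => ?_) p q
  · have h1 := abs_le.mp (hna.abs_diag_div_trace_sub_le hε ha1 i)
    have h2 := abs_le.mp (hnb.abs_diag_div_trace_sub_le hε hb1 j)
    set x := (a i i).re / ((a 0 0).re + (a 1 1).re + (a 2 2).re)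
    set y := (b j j).re / ((b 0 0).re + (b 1 1).re + (b 2 2).re)
    have hx : |x - 1 / 3| ≤ 4 * ε := abs_le.mpr h1
    have hy : |y - 1 / 3| ≤ 4 * ε := abs_le.mpr h2
    have hxy : |(x - 1 / 3) * (y - 1 / 3)| ≤ 4 * ε * 1 := by
      rw [abs_mul]
      gcongr
      linarith
    have hxy' := abs_le.mp hxy
    have e : x * y - 1 / 9 = (x - 1 / 3) * (y - 1 / 3) + (x - 1 / 3) / 3 + (y - 1 / 3) / 3 := by
      ring
    rw [e, abs_le]
    constructor <;> linarith [h1.1, h1.2, h2.1, h2.2, hxy'.1, hxy'.2]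
  · by_cases hik : i = k
    · have hjl : j ≠ l := fun hjl => h (by rw [hik, hjl])
      calc _ ≤ 1 * (3 * ε) := by
            gcongr
            · exact bound ha ha1 i k
            · exact small hb hb1 hnb j l hjl
        _ ≤ 100 * ε := by linarith
    · calc _ ≤ (3 * ε) * 1 := by
            gcongr
            · exact small ha ha1 hna i k hik
            · exact bound hb hb1 j l
        _ ≤ 100 * ε := by linarith

lemma disturbance_nonneg {n dA dB : ℕ} (ψ : Fin n → Fin dA × Fin dB → ℂ)
    (a : Matrix (Fin dA) (Fin dA) ℂ) (b : Matrix (Fin dB) (Fin dB) ℂ) :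
    0 ≤ disturbance ψ a b :=
  Real.iSup_nonneg fun _ => by positivity

lemma disturbLE_disturbance {n : ℕ} {ψ : Fin n → Fin 3 × Fin 3 → ℂ}
    {a b : Matrix (Fin 3) (Fin 3) ℂ} (ha : a.PosSemidef) (hb : b.PosSemidef)
    (hnz : ∀ i, star (ψ i) ⬝ᵥ (a ⊗ₖ b).mulVec (ψ i) ≠ 0) {i j : Fin n} (hij : i ≠ j)
    {α β α' β' : Fin 3 → ℂ} (hi : ψ i = kp α β) (hj : ψ j = kp α' β') :
    DisturbLE a b (disturbance ψ a b) α β α' β' := by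
  have hpos : ∀ i, 0 < (star (ψ i) ⬝ᵥ (a ⊗ₖ b).mulVec (ψ i)).re := fun i =>
    (Complex.pos_iff.mp
      (lt_of_le_of_ne ((ha.kronecker hb).dotProduct_mulVec_nonneg (ψ i)) (hnz i).symm)).1
  have h : _ ≤ disturbance ψ a b := le_ciSup
    (f := fun p : {q : Fin n × Fin n // q.1 ≠ q.2} =>
      ‖star (ψ p.1.1) ⬝ᵥ (a ⊗ₖ b).mulVec (ψ p.1.2)‖ /
        Real.sqrt ((star (ψ p.1.1) ⬝ᵥ (a ⊗ₖ b).mulVec (ψ p.1.1)).re *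
          (star (ψ p.1.2) ⬝ᵥ (a ⊗ₖ b).mulVec (ψ p.1.2)).re))
    (Set.finite_range _).bddAbove ⟨(i, j), hij⟩
  have hp := mul_pos (hpos i) (hpos j)
  rw [div_le_iff₀ (Real.sqrt_pos.mpr hp)] at h
  have h2 := pow_le_pow_left₀ (norm_nonneg _) h 2
  rw [mul_pow, Real.sq_sqrt hp.le] at h2
  unfold DisturbLE
  rw [← kronecker_sesq, ← kronecker_sesq, ← kronecker_sesq, ← hi, ← hj]
  exact h2

lemma hundred_le_constant :
    100 ≤ 6 * (1 + 6 * Real.sqrt 2 + 2 * Real.sqrt (3 * (6 + Real.sqrt 2))) := by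
  have h1 : (1.4 : ℝ) ≤ Real.sqrt 2 := Real.le_sqrt_of_sq_le (by norm_num)
  have h2 : (4.6 : ℝ) ≤ Real.sqrt (3 * (6 + Real.sqrt 2)) :=
    Real.le_sqrt_of_sq_le (by linarith)
  linarith

lemma nearScalar_of_bounds {M : Matrix (Fin 3) (Fin 3) ℂ} (hM : M.PosSemidef)
    (h1 : 0 < (M 1 1).re) {d ε : ℝ} (hd : 0 ≤ d) (hdε : d ≤ ε)
    (e0 : |(M 0 0).re - (M 1 1).re| ≤ 6 * ε * (M 1 1).re)
    (e2 : |(M 2 2).re - (M 1 1).re| ≤ 6 * ε * (M 1 1).re)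
    (f0 : ‖M 1 0‖ ≤ 2 * d * (M 1 1).re) (f2 : ‖M 1 2‖ ≤ 2 * d * (M 1 1).re)
    (g : ‖M 0 2‖ ≤ 3 * d * (M 1 1).re) : NearScalar M ε := by
  have hle : d * (M 1 1).re ≤ ε * (M 1 1).re := by gcongr
  have hnn : 0 ≤ d * (M 1 1).re := by positivity
  have e1 : |(M 1 1).re - (M 1 1).re| ≤ 6 * ε * (M 1 1).re := by
    rw [sub_self, abs_zero]
    linarith
  have f0' := hM.norm_apply_comm 0 1
  have f2' := hM.norm_apply_comm 2 1
  have g' := hM.norm_apply_comm 2 0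
  refine ⟨Fin.forall_fin_succ.mpr ⟨e0, Fin.forall_fin_two.mpr ⟨e1, e2⟩⟩, fun i j hij => ?_⟩
  fin_cases i <;> fin_cases j <;> simp at hij ⊢ <;> linarith

/-- Small disturbance on the rotated domino states forces both factors to be nearly scalar. -/
lemma nearScalar_of_small_disturbance {t1 t2 t3 t4 S : ℝ} (hS : 0 < S)
    (hS1 : S ≤ 1) (hs1 : S ≤ Real.sin (2 * t1)) (hs2 : S ≤ Real.sin (2 * t2))
    (hs3 : S ≤ Real.sin (2 * t3)) (hs4 : S ≤ Real.sin (2 * t4))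
    {a b : Matrix (Fin 3) (Fin 3) ℂ} (ha : a.PosSemidef) (hb : b.PosSemidef)
    (ha1 : 0 < (a 1 1).re) (hb1 : 0 < (b 1 1).re)
    (hnz : ∀ i, star (rotDomino t1 t2 t3 t4 i) ⬝ᵥ
      (a ⊗ₖ b).mulVec (rotDomino t1 t2 t3 t4 i) ≠ 0)
    (hsmall : 100 * disturbance (rotDomino t1 t2 t3 t4) a b ≤ S) :
    NearScalar a (disturbance (rotDomino t1 t2 t3 t4) a b / S) ∧
      NearScalar b (disturbance (rotDomino t1 t2 t3 t4) a b / S) := by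
  have hd := disturbance_nonneg (rotDomino t1 t2 t3 t4) a b
  have D {i j : Fin 9} (hij : i ≠ j) {α β α' β' : Fin 3 → ℂ}
      (hi : rotDomino t1 t2 t3 t4 i = kp α β) (hj : rotDomino t1 t2 t3 t4 j = kp α' β') :=
    disturbLE_disturbance ha hb hnz hij hi hj
  have sesq_ne_zero : ∀ {α β : Fin 3 → ℂ} (i : Fin 9), rotDomino t1 t2 t3 t4 i = kp α β →
      sesq a α α ≠ 0 ∧ sesq b β β ≠ 0 := by
    intro α β i hi
    have := hnz i
    rw [hi, kronecker_sesq] at this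
    exact ⟨left_ne_zero_of_mul this, right_ne_zero_of_mul this⟩
  have diag_pos : ∀ {M : Matrix (Fin 3) (Fin 3) ℂ}, M.PosSemidef → ∀ i,
      sesq M (e3 i) (e3 i) ≠ 0 → 0 < (M i i).re := by
    intro M hM i h
    rw [sesq_e3] at h
    exact (Complex.pos_iff.mp (lt_of_le_of_ne hM.diag_nonneg h.symm)).1
  have ha0 := diag_pos ha 0 (sesq_ne_zero (β := rot t1 0 1) 1 rfl).1
  have ha2 := diag_pos ha 2 (sesq_ne_zero (β := rot t2 1 2) 3 rfl).1
  have hb0 := diag_pos hb 0 (sesq_ne_zero (α := rot t3 1 2) 5 rfl).2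
  have hb2 := diag_pos hb 2 (sesq_ne_zero (α := rot t4 0 1) 7 rfl).2
  have ψ1 : rotDomino t1 t2 t3 t4 0 = kp (e3 1) (e3 1) := rfl
  have ψ2 : rotDomino t1 t2 t3 t4 1 = kp (e3 0) (rot t1 0 1) := rfl
  have ψ3 : rotDomino t1 t2 t3 t4 2 = kp (e3 0) (rotPerp t1 0 1) := rfl
  have ψ4 : rotDomino t1 t2 t3 t4 3 = kp (e3 2) (rot t2 1 2) := rfl
  have ψ5 : rotDomino t1 t2 t3 t4 4 = kp (e3 2) (rotPerp t2 1 2) := rfl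
  have ψ6 : rotDomino t1 t2 t3 t4 5 = kp (rot t3 1 2) (e3 0) := rfl
  have ψ7 : rotDomino t1 t2 t3 t4 6 = kp (rotPerp t3 1 2) (e3 0) := rfl
  have ψ8 : rotDomino t1 t2 t3 t4 7 = kp (rot t4 0 1) (e3 2) := rfl
  have ψ9 : rotDomino t1 t2 t3 t4 8 = kp (rotPerp t4 0 1) (e3 2) := rfl
  have diffB0 := abs_diag_sub_le ha hb hd ha0 (D (by decide) ψ2 ψ3)
  have diffB2 := abs_diag_sub_le ha hb hd ha2 (D (by decide) ψ4 ψ5)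
  have diffA2 := abs_diag_sub_le hb ha hd hb0 (D (by decide) ψ6 ψ7).swap
  have diffA0 := abs_diag_sub_le hb ha hd hb2 (D (by decide) ψ8 ψ9).swap
  have offA0 := norm_sq_center_le ha hb (D (by decide) ψ1 ψ2) (D (by decide) ψ1 ψ3)
  have offA2 := norm_sq_center_le ha hb (D (by decide) ψ1 ψ4) (D (by decide) ψ1 ψ5)
  have offB0 := norm_sq_center_le hb ha (D (by decide) ψ1 ψ6).swap (D (by decide) ψ1 ψ7).swap
  have offB2 := norm_sq_center_le hb ha (D (by decide) ψ1 ψ8).swap (D (by decide) ψ1 ψ9).swap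
  have cornerA := norm_sq_corner_le ha hb (D (by decide) ψ2 ψ4) (D (by decide) ψ2 ψ5)
    (D (by decide) ψ3 ψ4) (D (by decide) ψ3 ψ5)
  have cornerB := norm_sq_corner_le hb ha (D (by decide) ψ6 ψ8).swap (D (by decide) ψ6 ψ9).swap
    (D (by decide) ψ7 ψ8).swap (D (by decide) ψ7 ψ9).swap
  set d := disturbance (rotDomino t1 t2 t3 t4) a b
  have hnorm : ∀ {M : Matrix (Fin 3) (Fin 3) ℂ}, M.PosSemidef → ‖M 1 1‖ = (M 1 1).re := by
    intro M hM
    rw [hM.diag_eq_ofReal 1, Complex.norm_real, Complex.ofReal_re,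
      Real.norm_of_nonneg (hM.diag_re_nonneg 1)]
  have shrink : ∀ {x s R : ℝ}, S ≤ s → |x| * s ≤ R → |x| * S ≤ R := fun h h' =>
    (mul_le_mul_of_nonneg_left h (abs_nonneg _)).trans h'
  have drop : ∀ {x y z R : ℝ}, 0 ≤ y → x ^ 2 * (y + z) ≤ R → x ^ 2 * z ≤ R := by
    intro x y z R hy h
    nlinarith [mul_nonneg (sq_nonneg x) hy]
  replace diffB0 := shrink hs1 diffB0
  replace diffB2 := shrink hs2 diffB2
  replace diffA2 := shrink hs3 diffA2
  replace diffA0 := shrink hs4 diffA0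
  rw [abs_sub_comm, hb.norm_apply_comm 0 1] at diffB0
  rw [abs_sub_comm, ha.norm_apply_comm 0 1] at diffA0
  rw [add_comm (a 1 1).re] at diffA2
  rw [add_comm (b 1 1).re] at diffB2
  rw [hnorm hb] at offA0 offA2 cornerA
  rw [hnorm ha] at offB0 offB2 cornerB
  replace offA0 := drop (by positivity) offA0
  replace offB2 := drop (by positivity) offB2
  rw [add_comm ((b 1 1).re ^ 2), add_comm (b 1 1).re (b 2 2).re] at offA2
  rw [add_comm ((a 1 1).re ^ 2), add_comm (a 1 1).re (a 2 2).re] at offB0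
  replace offA2 := drop (by positivity) offA2
  replace offB0 := drop (by positivity) offB0
  obtain ⟨⟨X0, dA0⟩, ⟨X2, dA2⟩, ⟨Y0, dB0⟩, ⟨Y2, dB2⟩⟩ :=
    diag_ratio_bounds ha0.le ha1 ha2.le hb0.le hb1 hb2.le hd hsmall hS offA0 offA2 offB0 offB2
      diffA0 diffA2 diffB0 diffB2
  replace dA0 := le_mul_of_abs_sub_mul_le ha1 hS hsmall dA0
  replace dA2 := le_mul_of_abs_sub_mul_le ha1 hS hsmall dA2
  replace dB0 := le_mul_of_abs_sub_mul_le hb1 hS hsmall dB0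
  replace dB2 := le_mul_of_abs_sub_mul_le hb1 hS hsmall dB2
  have ZA : ‖a 0 2‖ ≤ 3 * d * (a 1 1).re := by
    refine corner_le ha1 ha2.le hb0.le hb1 hb2.le hd dA0.2.1 dA2.2.1 dB0.2.1 dB2.2.1 ?_
    rw [add_comm (b 2 2).re]
    refine le_trans ?_ cornerA
    gcongr
    linarith [sq_nonneg ‖b 0 1‖, sq_nonneg ‖b 0 2‖, sq_nonneg ‖b 1 2‖]
  have ZB : ‖b 0 2‖ ≤ 3 * d * (b 1 1).re := by
    refine corner_le hb1 hb2.le ha2.le ha1 ha0.le hd dB0.2.1 dB2.2.1 dA2.2.1 dA0.2.1 ?_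
    rw [add_comm (a 2 2).re]
    refine le_trans ?_ cornerB
    gcongr
    linarith [sq_nonneg ‖a 1 0‖, sq_nonneg ‖a 2 0‖, sq_nonneg ‖a 2 1‖]
  have hdS : d ≤ d / S := le_div_self hd hS hS1
  exact ⟨nearScalar_of_bounds ha ha1 hd hdS dA0.1 dA2.1 X0 X2 ZA,
    nearScalar_of_bounds hb hb1 hd hdS dB0.1 dB2.1 Y0 Y2 ZB⟩

/-- The rotated domino basis `S₃(θ₁,θ₂,θ₃,θ₄)` with
`0 < θᵢ ≤ π/4` is `(C / sin 2θ)`-rigid, where `θ = min θᵢ` and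
`C = 6(1 + 6√2 + 2√(3(6 + √2))) ≤ 114`. -/
theorem stmt10 (t1 t2 t3 t4 : ℝ)
    (h1 : 0 < t1 ∧ t1 ≤ Real.pi / 4) (h2 : 0 < t2 ∧ t2 ≤ Real.pi / 4)
    (h3 : 0 < t3 ∧ t3 ≤ Real.pi / 4) (h4 : 0 < t4 ∧ t4 ≤ Real.pi / 4)
    (th : ℝ) (hth : th = min (min t1 t2) (min t3 t4))
    (C : ℝ) (hC : C = 6 * (1 + 6 * Real.sqrt 2 + 2 * Real.sqrt (3 * (6 + Real.sqrt 2))))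
    (a b : Matrix (Fin 3) (Fin 3) ℂ) (ha : a.PosSemidef) (hb : b.PosSemidef)
    (hnz : ∀ i, star (rotDomino t1 t2 t3 t4 i) ⬝ᵥ
      (a ⊗ₖ b).mulVec (rotDomino t1 t2 t3 t4 i) ≠ 0) :
    maxEntry (((a ⊗ₖ b).trace)⁻¹ • (a ⊗ₖ b) -
        ((9 : ℂ))⁻¹ • (1 : Matrix (Fin 3 × Fin 3) (Fin 3 × Fin 3) ℂ)) ≤
      (C / Real.sin (2 * th)) * disturbance (rotDomino t1 t2 t3 t4) a b := by
  obtain ⟨ht, ht1, ht2, ht3, ht4⟩ : 0 < th ∧ th ≤ t1 ∧ th ≤ t2 ∧ th ≤ t3 ∧ th ≤ t4 := by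
    subst hth
    simp [h1.1, h2.1, h3.1, h4.1]
  have hpi := Real.pi_pos
  have hS : 0 < Real.sin (2 * th) := Real.sin_pos_of_pos_of_lt_pi (by linarith) (by linarith [h1.2])
  have mono : ∀ {t : ℝ}, th ≤ t → t ≤ Real.pi / 4 → Real.sin (2 * th) ≤ Real.sin (2 * t) :=
    fun h h' => Real.sin_le_sin_of_le_of_le_pi_div_two (by linarith) (by linarith) (by linarith)
  have hC100 : 100 ≤ C := hC ▸ hundred_le_constant
  have hd := disturbance_nonneg (rotDomino t1 t2 t3 t4) a b
  have hcenter : a 1 1 * b 1 1 ≠ 0 := by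
    have := hnz 0
    rwa [show rotDomino t1 t2 t3 t4 0 = kp (e3 1) (e3 1) from rfl, kronecker_sesq, sesq_e3,
      sesq_e3] at this
  have ha1 : 0 < (a 1 1).re := (Complex.pos_iff.mp
    (lt_of_le_of_ne ha.diag_nonneg (left_ne_zero_of_mul hcenter).symm)).1
  have hb1 : 0 < (b 1 1).re := (Complex.pos_iff.mp
    (lt_of_le_of_ne hb.diag_nonneg (right_ne_zero_of_mul hcenter).symm)).1
  have hR : 100 * (disturbance (rotDomino t1 t2 t3 t4) a b / Real.sin (2 * th)) ≤
      C / Real.sin (2 * th) * disturbance (rotDomino t1 t2 t3 t4) a b := by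
    rw [div_mul_eq_mul_div, ← mul_div_assoc]
    gcongr
  refine le_trans (ciSup_le fun p => ?_) hR
  rcases le_total (100 * disturbance (rotDomino t1 t2 t3 t4) a b) (Real.sin (2 * th)) with h | h
  · obtain ⟨hna, hnb⟩ := nearScalar_of_small_disturbance hS (Real.sin_le_one _) (mono ht1 h1.2)
      (mono ht2 h2.2) (mono ht3 h3.2) (mono ht4 h4.2) ha hb ha1 hb1 hnz h
    exact norm_kronecker_sub_le_of_nearScalar ha hb (by positivity)
      (by rw [div_le_iff₀ hS]; linarith) ha1 hb1 hna hnb p.1 p.2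
  · refine (norm_kronecker_sub_le_one ha hb ha1 hb1 p.1 p.2).trans ?_
    rwa [← mul_div_assoc, one_le_div hS]
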